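/- Let G be a connected labeled semi-Hamiltonian graph on vertex set [n], i.e., the path L_n is a subgraph of G and {1,n} is not an edge of G. Then the minimal prime ideals of the Hankel edge ideal I_G are exactly I_X and (x_2,...,x_n); in particular, height I_G = n-1. -/

import Mathlib

open MvPolynomial

/-- The Hankel binomial `g_{ij} = x_i x_{j+1} - x_j x_{i+1}` (0-indexed vertices). -/
noncomputable def hg (n : ℕ) (K : Type*) [Field K] (i j : Fin n) :
    MvPolynomial (Fin (n + 1)) K :=
  X i.castSucc * X j.succ - X j.castSucc * X i.succ

/-- The generating set of the Hankel edge ideal of a graph `G` on `[n]`. -/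
noncomputable def hgenSet (n : ℕ) (K : Type*) [Field K] (G : SimpleGraph (Fin n)) :
    Set (MvPolynomial (Fin (n + 1)) K) :=
  { f | ∃ i j : Fin n, i < j ∧ G.Adj i j ∧ f = hg n K i j }

/-- The Hankel edge ideal `I_G`. -/
noncomputable def hankelIdeal (n : ℕ) (K : Type*) [Field K] (G : SimpleGraph (Fin n)) :
    Ideal (MvPolynomial (Fin (n + 1)) K) :=
  Ideal.span (hgenSet n K G)

/-- `I_X`, the ideal of 2-minors of the 2×n Hankel matrix, i.e. `I_{K_n}`. -/
noncomputable def IX (n : ℕ) (K : Type*) [Field K] :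
    Ideal (MvPolynomial (Fin (n + 1)) K) :=
  hankelIdeal n K ⊤

/-- The height of an ideal: the infimum of the heights of primes containing it. -/
noncomputable def ht {R : Type*} [CommRing R] (I : Ideal R) : ℕ∞ :=
  ⨅ (p : PrimeSpectrum R) (_ : I ≤ p.asIdeal), Order.height p

/-- The minimal number of generators of an ideal. -/
noncomputable def mu {R : Type*} [CommRing R] (I : Ideal R) : ℕ∞ :=
  ⨅ (s : Finset R) (_ : Ideal.span (s : Set R) = I), (s.card : ℕ∞)

/-- The arithmetical rank of an ideal. -/
noncomputable def ara {R : Type*} [CommRing R] (I : Ideal R) : ℕ∞ :=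
  ⨅ (s : Finset R) (_ : (Ideal.span (s : Set R)).radical = I.radical), (s.card : ℕ∞)

/-- The labeled path `L_n` with edges `{i, i+1}` (0-indexed). -/
def pathG (n : ℕ) : SimpleGraph (Fin n) :=
  SimpleGraph.fromRel (fun i j => (i : ℕ) + 1 = (j : ℕ))

/-- The labeled cycle `C_n` with edges `{i, i+1}` and `{0, n-1}` (0-indexed). -/
def cycleG (n : ℕ) : SimpleGraph (Fin n) :=
  SimpleGraph.fromRel (fun i j =>
    (i : ℕ) + 1 = (j : ℕ) ∨ ((i : ℕ) = 0 ∧ (j : ℕ) = n - 1))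

/-- The monomial prime ideal generated by the variables with index in `[lo, hi]` (0-indexed). -/
noncomputable def Pvars (n : ℕ) (K : Type*) [Field K] (lo hi : ℕ) :
    Ideal (MvPolynomial (Fin (n + 1)) K) :=
  Ideal.span { f | ∃ i : Fin (n + 1), lo ≤ (i : ℕ) ∧ (i : ℕ) ≤ hi ∧ f = X i }

/-!
Modulo a prime `P` containing the path ideal, the classes `x_i` satisfy `x_i x_{i+2} = x_{i+1}^2`
in a domain. If one interior `x_i` is nonzero then all are, so consecutive ratios agree and `P`
contains `I_X`; otherwise `P` contains `(x_2, …, x_n)`. The ideal `I_X` is prime because it is the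
kernel of `x_i ↦ s t ^ i`: modulo `I_X` a monomial depends only on its degree and weight. Heights
are bounded below by explicit chains of primes and above by Krull's theorem.
-/

section Ideals

variable {R : Type*} [CommRing R]

theorem ht_eq_height (I : Ideal R) : ht I = I.height := by
  simp only [ht, ← PrimeSpectrum.height_eq_orderHeight]
  refine le_antisymm ?_ (le_iInf₂ fun p hp => Ideal.height_mono hp)
  rw [Ideal.height_eq_inf_minimalPrimes]
  exact le_iInf₂ fun J hJ => iInf₂_le (⟨J, hJ.1.1⟩ : PrimeSpectrum R) hJ.1.2

theorem minimalPrimes_eq_pair {I P Q : Ideal R} [P.IsPrime] [Q.IsPrime] (hIP : I ≤ P)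
    (hIQ : I ≤ Q) (hPQ : ¬ P ≤ Q) (hQP : ¬ Q ≤ P)
    (hI : ∀ J : Ideal R, J.IsPrime → I ≤ J → P ≤ J ∨ Q ≤ J) : I.minimalPrimes = {P, Q} := by
  ext J
  rw [Set.mem_insert_iff, Set.mem_singleton_iff]
  constructor
  · rintro ⟨⟨hJ, hIJ⟩, hmin⟩
    exact (hI J hJ hIJ).imp (fun h => (hmin ⟨inferInstance, hIP⟩ h).antisymm h)
      fun h => (hmin ⟨inferInstance, hIQ⟩ h).antisymm h
  · rintro (rfl | rfl)
    · exact ⟨⟨inferInstance, hIP⟩, fun L hL hLJ =>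
        (hI L hL.1 hL.2).resolve_right fun h => hQP (h.trans hLJ)⟩
    · exact ⟨⟨inferInstance, hIQ⟩, fun L hL hLJ =>
        (hI L hL.1 hL.2).resolve_left fun h => hPQ (h.trans hLJ)⟩

end Ideals

section VariableIdeals

variable {σ R : Type*} [CommRing R]

theorem X_mem_span_X_image_iff [Nontrivial R] {s : Set σ} {i : σ} :
    (X i : MvPolynomial σ R) ∈ Ideal.span (X '' s) ↔ i ∈ s := by
  classical
  simp [mem_ideal_span_X_image, support_X, Finsupp.single_apply]

open Classical in
theorem span_X_image_eq_ker_aeval (s : Set σ) :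
    Ideal.span (X '' s) =
      RingHom.ker (aeval fun i => if i ∈ s then 0 else X i :
        MvPolynomial σ R →ₐ[R] MvPolynomial σ R) := by
  set kill : MvPolynomial σ R →ₐ[R] MvPolynomial σ R := aeval fun i => if i ∈ s then 0 else X i
  apply le_antisymm
  · rw [Ideal.span_le]
    rintro _ ⟨i, hi, rfl⟩
    simp [RingHom.mem_ker, kill, hi]
  · set quot := Ideal.Quotient.mkₐ R (Ideal.span (X '' s : Set (MvPolynomial σ R)))
    have quot_comp_kill : quot.comp kill = quot := by
      refine algHom_ext fun i => ?_
      by_cases hi : i ∈ s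
      · have : quot (X i) = 0 :=
          Ideal.Quotient.eq_zero_iff_mem.2 (Ideal.subset_span ⟨i, hi, rfl⟩)
        simp [kill, hi, this]
      · simp [kill, hi]
    intro p hp
    have : quot (kill p) = quot p := DFunLike.congr_fun quot_comp_kill p
    rw [RingHom.mem_ker.1 hp, map_zero] at this
    exact Ideal.Quotient.eq_zero_iff_mem.1 this.symm

instance isPrime_span_X_image [IsDomain R] (s : Set σ) :
    (Ideal.span (X '' s : Set (MvPolynomial σ R))).IsPrime := by
  classical
  rw [span_X_image_eq_ker_aeval]
  exact RingHom.ker_isPrime _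

theorem card_le_height_span_X_image [IsDomain R] (s : Finset σ) :
    (s.card : ℕ∞) ≤ (Ideal.span (X '' s : Set (MvPolynomial σ R))).height := by
  classical
  induction s using Finset.induction_on with
  | empty => simp
  | insert i s hi ih =>
    have hlt : Ideal.span (X '' (s : Set σ) : Set (MvPolynomial σ R)) <
        Ideal.span (X '' (insert i s : Finset σ)) := by
      refine SetLike.lt_iff_le_and_exists.2 ⟨Ideal.span_mono ?_, X i, ?_, ?_⟩
      · exact Set.image_mono (Finset.coe_subset.2 (Finset.subset_insert i s))
      · simp [X_mem_span_X_image_iff]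
      · simpa [X_mem_span_X_image_iff] using hi
    rw [Finset.card_insert_of_notMem hi, Nat.cast_add_one]
    exact (add_le_add_left ih 1).trans (Ideal.height_add_one_le_of_lt_of_isPrime hlt)

theorem height_span_X_image [IsDomain R] [IsNoetherianRing R] [Finite σ] (s : Finset σ) :
    (Ideal.span (X '' s : Set (MvPolynomial σ R))).height = s.card := by
  classical
  refine le_antisymm ?_ (card_le_height_span_X_image s)
  have hmin : Ideal.span (X '' s : Set (MvPolynomial σ R)) ∈
      (Ideal.span ((s.image X : Finset (MvPolynomial σ R)) : Set _)).minimalPrimes := by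
    rw [Finset.coe_image, Ideal.minimalPrimes_eq_subsingleton_self]
    rfl
  exact (Ideal.height_le_card_of_mem_minimalPrimes_span_finset hmin).trans
    (by exact_mod_cast Finset.card_image_le)

end VariableIdeals

section HankelSequences

variable {R : Type*} [CommRing R] {n : ℕ} {x : ℕ → R}

/-- All 2-minors of the `2 × n` Hankel matrix with rows `(x 0, …, x (n - 1))` and `(x 1, …, x n)`
vanish; the values of `x` beyond `n` are ignored. -/
def HankelMinorsVanish (n : ℕ) (x : ℕ → R) : Prop :=
  ∀ i j, i < n → j < n → x i * x (j + 1) = x j * x (i + 1)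

/-- The common value of the monomials of degree `d` and weight `w ≤ n * d` in `x 0, …, x n` when
all Hankel minors vanish, where `x i` has weight `i`. It is the monomial with as many factors `x n`
as possible, at most one further factor other than `x 0`, and the rest equal to `x 0`. -/
def hankelNormalForm (n : ℕ) (x : ℕ → R) : ℕ → ℕ → R
  | 0, _ => 1
  | d + 1, w => if n ≤ w then x n * hankelNormalForm n x d (w - n) else x w * x 0 ^ d

namespace HankelMinorsVanish

theorem shift_mul_eq_mul_shift (hx : HankelMinorsVanish n x) {a b k : ℕ} (ha : a + k ≤ n)
    (hb : b + k ≤ n) : x (a + k) * x b = x a * x (b + k) := by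
  induction k generalizing b with
  | zero => rfl
  | succ k ih =>
    calc x (a + k + 1) * x b
      _ = x (a + k) * x (b + 1) := by rw [hx (a + k) b (by omega) (by omega), mul_comm]
      _ = x a * x (b + (k + 1)) := by rw [ih (by omega) (by omega), add_assoc, add_comm 1]

theorem mul_eq_mul_of_add_eq_add (hx : HankelMinorsVanish n x) {a b c d : ℕ} (ha : a ≤ n)
    (hb : b ≤ n) (hc : c ≤ n) (hd : d ≤ n) (h : a + b = c + d) : x a * x b = x c * x d := by
  rcases le_total a c with hac | hca
  · obtain ⟨k, rfl⟩ := Nat.exists_eq_add_of_le hac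
    obtain rfl : b = d + k := by omega
    exact (hx.shift_mul_eq_mul_shift hc hb).symm
  · obtain ⟨k, rfl⟩ := Nat.exists_eq_add_of_le hca
    obtain rfl : d = b + k := by omega
    exact hx.shift_mul_eq_mul_shift ha hd

theorem normalForm_mul (hx : HankelMinorsVanish n x) {i : ℕ} (hi : i ≤ n) {d w : ℕ}
    (hw : w ≤ n * d) :
    hankelNormalForm n x d w * x i = hankelNormalForm n x (d + 1) (w + i) := by
  induction d generalizing w with
  | zero =>
    obtain rfl : w = 0 := by omega
    rcases hi.lt_or_eq with hi | rfl
    · simp [hankelNormalForm, hi.not_ge]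
    · simp [hankelNormalForm]
  | succ d ih =>
    rw [Nat.mul_succ] at hw
    rw [hankelNormalForm.eq_2 n x (w + i)]
    by_cases hnw : n ≤ w
    · rw [hankelNormalForm, if_pos hnw, if_pos (by omega), mul_assoc, ih (by omega),
        Nat.sub_add_comm hnw]
    · rw [hankelNormalForm, if_neg hnw]
      split_ifs with hnwi
      · rw [hankelNormalForm, if_neg (by omega), mul_right_comm,
          hx.mul_eq_mul_of_add_eq_add (c := n) (d := w + i - n) (by omega) hi le_rfl (by omega)
            (by omega), mul_assoc]
      · rw [mul_right_comm, hx.mul_eq_mul_of_add_eq_add (c := w + i) (d := 0) (by omega) hi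
          (by omega) (by omega) rfl]
        ring

end HankelMinorsVanish

variable [IsDomain R]

theorem hankelMinorsVanish_of_ne_zero (hx : ∀ i, i + 2 ≤ n → x i * x (i + 2) = x (i + 1) ^ 2)
    (hne : ∀ i ≤ n, x i ≠ 0) : HankelMinorsVanish n x := by
  have minor_eq_zero : ∀ i j, i ≤ j → j < n → x i * x (j + 1) = x j * x (i + 1) := by
    intro i j hij
    induction j, hij using Nat.le_induction with
    | base => exact fun _ => rfl
    | succ j _ ih =>
      intro hj
      apply mul_left_cancel₀ (hne j (by omega))
      linear_combination x i * hx j (by omega) + x (j + 1) * ih (by omega)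
  intro i j hi hj
  rcases le_total i j with hij | hji
  · exact minor_eq_zero i j hij hj
  · exact (minor_eq_zero j i hji hi).symm

theorem forall_ne_zero_of_interior_ne_zero
    (hx : ∀ i, i + 2 ≤ n → x i * x (i + 2) = x (i + 1) ^ 2) {j : ℕ} (hj : 1 ≤ j) (hjn : j < n)
    (hxj : x j ≠ 0) : ∀ i ≤ n, x i ≠ 0 := by
  have mul_ne_zero_of_middle : ∀ i, i + 2 ≤ n → x (i + 1) ≠ 0 → x i * x (i + 2) ≠ 0 :=
    fun i hi hxi => hx i hi ▸ pow_ne_zero 2 hxi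
  intro i hi
  rcases le_total j i with hji | hij
  · induction i, hji using Nat.le_induction with
    | base => exact hxj
    | succ i hji ih =>
      obtain ⟨i, rfl⟩ := Nat.exists_eq_add_of_le' (hj.trans hji)
      exact right_ne_zero_of_mul (mul_ne_zero_of_middle i hi (ih (by omega)))
  · induction hij using Nat.decreasingInduction with
    | self => exact hxj
    | of_succ i hij ih =>
      exact left_ne_zero_of_mul (mul_ne_zero_of_middle i (by omega) (ih (by omega)))

theorem hankelMinorsVanish_or_interior_eq_zero
    (hx : ∀ i, i + 2 ≤ n → x i * x (i + 2) = x (i + 1) ^ 2) :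
    HankelMinorsVanish n x ∨ ∀ j, 1 ≤ j → j < n → x j = 0 := by
  refine or_iff_not_imp_right.2 fun h => ?_
  push Not at h
  obtain ⟨j, hj, hjn, hxj⟩ := h
  exact hankelMinorsVanish_of_ne_zero hx (forall_ne_zero_of_interior_ne_zero hx hj hjn hxj)

end HankelSequences

section HankelIdeals

variable {n : ℕ} {K : Type*} [Field K] {G H : SimpleGraph (Fin n)}

theorem hankelIdeal_mono (h : G ≤ H) : hankelIdeal n K G ≤ hankelIdeal n K H :=
  Ideal.span_mono fun _ ⟨i, j, hij, hadj, hf⟩ => ⟨i, j, hij, h hadj, hf⟩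

section Evaluation

variable {R : Type*} [CommRing R] {f : MvPolynomial (Fin (n + 1)) K →+* R} {x : ℕ → R}

theorem hankelIdeal_le_ker_iff (hf : ∀ i : Fin (n + 1), f (X i) = x i) :
    hankelIdeal n K G ≤ RingHom.ker f ↔
      ∀ i j : Fin n, i < j → G.Adj i j → x i * x (j + 1) = x j * x (i + 1) := by
  have map_hg (i j : Fin n) : f (hg n K i j) = x i * x (j + 1) - x j * x (i + 1) := by
    simp [hg, hf]
  rw [hankelIdeal, Ideal.span_le]
  constructor
  · intro h i j hij hadj
    rw [← sub_eq_zero, ← map_hg]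
    exact h ⟨i, j, hij, hadj, rfl⟩
  · rintro h _ ⟨i, j, hij, hadj, rfl⟩
    rw [SetLike.mem_coe, RingHom.mem_ker, map_hg, h i j hij hadj, sub_self]

theorem IX_le_ker_iff (hf : ∀ i : Fin (n + 1), f (X i) = x i) :
    IX n K ≤ RingHom.ker f ↔ HankelMinorsVanish n x := by
  rw [IX, hankelIdeal_le_ker_iff hf]
  constructor
  · intro h i j hi hj
    rcases lt_trichotomy i j with hij | rfl | hji
    · exact h ⟨i, hi⟩ ⟨j, hj⟩ hij (Fin.ne_of_lt hij)
    · rfl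
    · exact (h ⟨j, hj⟩ ⟨i, hi⟩ hji (Fin.ne_of_lt hji)).symm
  · exact fun h i j _ _ => h i j i.2 j.2

theorem Pvars_le_ker_iff (hf : ∀ i : Fin (n + 1), f (X i) = x i) {lo hi : ℕ} (hhi : hi ≤ n) :
    Pvars n K lo hi ≤ RingHom.ker f ↔ ∀ k, lo ≤ k → k ≤ hi → x k = 0 := by
  rw [Pvars, Ideal.span_le]
  constructor
  · intro h k hlo hk
    rw [← hf ⟨k, by omega⟩]
    exact h ⟨⟨k, by omega⟩, hlo, hk, rfl⟩
  · rintro h _ ⟨i, hlo, hi, rfl⟩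
    rw [SetLike.mem_coe, RingHom.mem_ker, hf, h i hlo hi]

theorem hankelIdeal_pathG_le_ker (hf : ∀ i : Fin (n + 1), f (X i) = x i)
    (h : hankelIdeal n K (pathG n) ≤ RingHom.ker f) {i : ℕ} (hi : i + 2 ≤ n) :
    x i * x (i + 2) = x (i + 1) ^ 2 := by
  rw [sq]
  exact (hankelIdeal_le_ker_iff hf).1 h ⟨i, by omega⟩ ⟨i + 1, by omega⟩
    (Fin.mk_lt_mk.2 i.lt_succ_self) (by simp [pathG])

theorem hankelIdeal_le_ker_of_interior_eq_zero (hn : 0 < n)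
    (hne : ¬ G.Adj ⟨0, hn⟩ ⟨n - 1, by omega⟩) (hf : ∀ i : Fin (n + 1), f (X i) = x i)
    (hx : ∀ k, 1 ≤ k → k ≤ n - 1 → x k = 0) : hankelIdeal n K G ≤ RingHom.ker f := by
  rw [hankelIdeal_le_ker_iff hf]
  rintro ⟨i, hi⟩ ⟨j, hj⟩ hij hadj
  rw [Fin.mk_lt_mk] at hij
  rw [hx j (by omega) (by omega), zero_mul]
  obtain rfl | hi0 := Nat.eq_zero_or_pos i
  · have hjn : j ≠ n - 1 := by
      rintro rfl
      exact hne hadj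
    rw [hx (j + 1) (by omega) (by omega), mul_zero]
  · rw [hx i hi0 (by omega), zero_mul]

end Evaluation

theorem exists_quotient_mk_X_eq (I : Ideal (MvPolynomial (Fin (n + 1)) K)) :
    ∃ x : ℕ → MvPolynomial (Fin (n + 1)) K ⧸ I,
      ∀ i : Fin (n + 1), Ideal.Quotient.mk I (X i) = x i :=
  ⟨fun k => Ideal.Quotient.mk I (X (Fin.ofNat (n + 1) k)), fun i => by
    simp only [Fin.ofNat_val_eq_self]⟩

theorem IX_le_or_Pvars_le {P : Ideal (MvPolynomial (Fin (n + 1)) K)} [P.IsPrime]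
    (hP : hankelIdeal n K (pathG n) ≤ P) : IX n K ≤ P ∨ Pvars n K 1 (n - 1) ≤ P := by
  obtain ⟨x, hx⟩ := exists_quotient_mk_X_eq P
  rw [← P.mk_ker] at hP ⊢
  rw [IX_le_ker_iff hx, Pvars_le_ker_iff hx (n.sub_le 1)]
  exact (hankelMinorsVanish_or_interior_eq_zero fun _ => hankelIdeal_pathG_le_ker hx hP).imp_right
    fun h k hk hkn => h k hk (by omega)

theorem hankelIdeal_le_Pvars (hn : 0 < n) (hne : ¬ G.Adj ⟨0, hn⟩ ⟨n - 1, by omega⟩) :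
    hankelIdeal n K G ≤ Pvars n K 1 (n - 1) := by
  obtain ⟨x, hx⟩ := exists_quotient_mk_X_eq (Pvars n K 1 (n - 1))
  have hker := (Pvars n K 1 (n - 1)).mk_ker
  rw [← hker]
  exact hankelIdeal_le_ker_of_interior_eq_zero hn hne hx
    ((Pvars_le_ker_iff hx (n.sub_le 1)).1 hker.ge)

theorem not_IX_le_Pvars (hn : 2 ≤ n) : ¬ IX n K ≤ Pvars n K 1 (n - 1) := by
  intro h
  let x : ℕ → K := fun k => if 1 ≤ k ∧ k < n then 0 else 1
  have hx (i : Fin (n + 1)) : eval (fun j : Fin (n + 1) => x j) (X i) = x i := by rw [eval_X]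
  have hPvars : Pvars n K 1 (n - 1) ≤ RingHom.ker (eval fun j : Fin (n + 1) => x j) :=
    (Pvars_le_ker_iff hx (n.sub_le 1)).2 fun k hk hkn => if_pos ⟨hk, by omega⟩
  have hminor := (IX_le_ker_iff hx).1 (h.trans hPvars) 0 (n - 1) (by omega) (by omega)
  rw [Nat.sub_add_cancel (by omega)] at hminor
  have hlast : x (n - 1) = 0 := if_pos (by omega)
  simp [hlast, x] at hminor

theorem Pvars_eq_span_X_image (lo hi : ℕ) :
    Pvars n K lo hi = Ideal.span (X '' {i : Fin (n + 1) | lo ≤ (i : ℕ) ∧ (i : ℕ) ≤ hi}) := by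
  refine congrArg Ideal.span (Set.ext fun f => ?_)
  simp [and_assoc, eq_comm]

instance isPrime_Pvars (lo hi : ℕ) : (Pvars n K lo hi).IsPrime := by
  rw [Pvars_eq_span_X_image]
  exact isPrime_span_X_image _

theorem height_Pvars {lo hi : ℕ} (hhi : hi ≤ n) :
    (Pvars n K lo hi).height = ((hi + 1 - lo : ℕ) : ℕ∞) := by
  let s : Finset (Fin (n + 1)) := (Finset.Icc lo hi).attachFin fun k hk => by
    have := (Finset.mem_Icc.1 hk).2
    omega
  have hs : (s : Set (Fin (n + 1))) = {i : Fin (n + 1) | lo ≤ (i : ℕ) ∧ (i : ℕ) ≤ hi} := by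
    ext i
    simp [s]
  rw [Pvars_eq_span_X_image, ← hs, height_span_X_image, Finset.card_attachFin, Nat.card_Icc]

end HankelIdeals

section Parametrization

variable (R : Type*) [CommRing R]

/-- The geometric progression `s, s t, …, s t ^ k`, with `s = X 0` and `t = X 1`, continued by the
variables `X (k + 1), X (k + 2), …`. -/
noncomputable def geomPrefix (k i : ℕ) : MvPolynomial ℕ R :=
  if i ≤ k then X 0 * X 1 ^ i else X i

/-- The substitution `x_i ↦ s t ^ i` for `i ≤ k` fixing the later variables. For `k = n` it
parametrizes the affine cone over the rational normal curve; the kernels for `k = 1, …, n` form a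
strict chain of primes. -/
noncomputable def geomSubst (n k : ℕ) : MvPolynomial (Fin (n + 1)) R →ₐ[R] MvPolynomial ℕ R :=
  aeval fun i => geomPrefix R k i

variable {R} {n k : ℕ}

@[simp]
theorem geomSubst_X (i : Fin (n + 1)) : geomSubst R n k (X i) = geomPrefix R k i :=
  aeval_X _ i

theorem geomPrefix_of_le {i : ℕ} (hi : i ≤ k) : geomPrefix R k i = X 0 * X 1 ^ i :=
  if_pos hi

theorem geomPrefix_of_lt {i : ℕ} (hi : k < i) : geomPrefix R k i = X i :=
  if_neg hi.not_ge

theorem hankelMinorsVanish_geomPrefix : HankelMinorsVanish k (geomPrefix R k) := by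
  intro i j hi hj
  rw [geomPrefix_of_le hi.le, geomPrefix_of_le hj.le, geomPrefix_of_le (i := i + 1) hi,
    geomPrefix_of_le (i := j + 1) hj]
  ring

theorem ker_geomSubst_le_ker_geomSubst_succ (hk : 1 ≤ k) :
    RingHom.ker (geomSubst R n k) ≤ RingHom.ker (geomSubst R n (k + 1)) := by
  let next : MvPolynomial ℕ R →ₐ[R] MvPolynomial ℕ R :=
    aeval fun i => if i = k + 1 then X 0 * X 1 ^ i else X i
  have next_geomPrefix (i : ℕ) : next (geomPrefix R k i) = geomPrefix R (k + 1) i := by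
    rcases lt_trichotomy i (k + 1) with hi | rfl | hi
    · rw [geomPrefix_of_le (by omega), geomPrefix_of_le hi.le]
      simp [next, show k ≠ 0 by omega]
    · rw [geomPrefix_of_lt k.lt_succ_self, geomPrefix_of_le le_rfl]
      simp [next]
    · rw [geomPrefix_of_lt (by omega), geomPrefix_of_lt hi]
      simp [next, hi.ne']
  have next_comp : next.comp (geomSubst R n k) = geomSubst R n (k + 1) :=
    algHom_ext fun i => by simp [next_geomPrefix]
  intro p hp
  rw [RingHom.mem_ker] at hp ⊢
  rw [← next_comp, AlgHom.comp_apply, hp, map_zero]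

section Kernel

variable {A : Type*} [CommRing A] [Algebra R A] {x : ℕ → A}

theorem exists_geomSubst_monomial_eq (hx : HankelMinorsVanish n x)
    {f : MvPolynomial (Fin (n + 1)) R →ₐ[R] A} (hf : ∀ i : Fin (n + 1), f (X i) = x i)
    (m : Fin (n + 1) →₀ ℕ) (a : R) :
    ∃ (c : R) (d w : ℕ), w ≤ n * d ∧ geomSubst R n n (monomial m a) = c • (X 0 ^ d * X 1 ^ w) ∧
      f (monomial m a) = c • hankelNormalForm n x d w := by
  refine induction_on_monomial ?_ ?_ m a
  · intro a
    refine ⟨a, 0, 0, le_rfl, ?_, ?_⟩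
    · simp [← algebraMap_eq, Algebra.smul_def]
    · simp [← algebraMap_eq, Algebra.smul_def, hankelNormalForm]
  · rintro p i ⟨c, d, w, hw, hsubst, hfp⟩
    have hi : (i : ℕ) ≤ n := Nat.lt_succ_iff.1 i.2
    refine ⟨c, d + 1, w + i, by rw [Nat.mul_succ]; omega, ?_, ?_⟩
    · rw [map_mul, hsubst, geomSubst_X, geomPrefix_of_le hi, smul_mul_assoc]
      congr 1
      ring
    · rw [map_mul, hfp, hf, smul_mul_assoc, hx.normalForm_mul hi hw]

-- A monomial's image under `f` depends only on its degree and weight, which are the exponents of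
-- its image under `geomSubst`; so `f` factors `R`-linearly through `geomSubst`.
theorem ker_geomSubst_le_ker (hx : HankelMinorsVanish n x)
    {f : MvPolynomial (Fin (n + 1)) R →ₐ[R] A} (hf : ∀ i : Fin (n + 1), f (X i) = x i) :
    RingHom.ker (geomSubst R n n) ≤ RingHom.ker f := by
  let lift : MvPolynomial ℕ R →ₗ[R] A :=
    (basisMonomials ℕ R).constr R fun e => hankelNormalForm n x (e 0) (e 1)
  have lift_monomial (d w : ℕ) : lift (X 0 ^ d * X 1 ^ w) = hankelNormalForm n x d w := by
    have hbasis : (X 0 ^ d * X 1 ^ w : MvPolynomial ℕ R) =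
        basisMonomials ℕ R (Finsupp.single 0 d + Finsupp.single 1 w) := by
      simp [X_pow_eq_monomial, monomial_mul]
    rw [hbasis, Module.Basis.constr_basis]
    simp
  have lift_geomSubst (p : MvPolynomial (Fin (n + 1)) R) : lift (geomSubst R n n p) = f p := by
    induction p using MvPolynomial.induction_on' with
    | monomial m a =>
      obtain ⟨c, d, w, -, hsubst, hfm⟩ := exists_geomSubst_monomial_eq hx hf m a
      rw [hsubst, map_smul, lift_monomial, hfm]
    | add p q hp hq => rw [map_add, map_add, map_add, hp, hq]
  intro p hp
  rw [RingHom.mem_ker, ← lift_geomSubst, RingHom.mem_ker.1 hp, map_zero]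

end Kernel

end Parametrization

section HankelPrime

variable {K : Type*} [Field K] {n k : ℕ}

theorem IX_eq_ker_geomSubst : IX n K = RingHom.ker (geomSubst K n n) := by
  apply le_antisymm
  · exact (IX_le_ker_iff (f := (geomSubst K n n).toRingHom) geomSubst_X).2
      hankelMinorsVanish_geomPrefix
  · obtain ⟨x, hx⟩ := exists_quotient_mk_X_eq (IX n K)
    have hker := (IX n K).mk_ker
    have hminors : HankelMinorsVanish n x := (IX_le_ker_iff hx).1 hker.ge
    exact (ker_geomSubst_le_ker (f := Ideal.Quotient.mkₐ K (IX n K)) hminors hx).trans hker.le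

instance isPrime_IX : (IX n K).IsPrime := by
  rw [IX_eq_ker_geomSubst]
  exact RingHom.ker_isPrime _

theorem not_Pvars_le_IX (hn : 2 ≤ n) : ¬ Pvars n K 1 (n - 1) ≤ IX n K := by
  rw [IX_eq_ker_geomSubst]
  intro h
  have h1 : geomPrefix K n 1 = 0 :=
    (Pvars_le_ker_iff (f := (geomSubst K n n).toRingHom) geomSubst_X (n.sub_le 1)).1 h 1 le_rfl
      (by omega)
  rw [geomPrefix_of_le (by omega)] at h1
  simp [X_ne_zero] at h1

-- The minor `x_0 x_{k+1} - x_k x_1` separates the two kernels.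
theorem ker_geomSubst_lt_succ (hk : 1 ≤ k) (hkn : k < n) :
    RingHom.ker (geomSubst K n k) < RingHom.ker (geomSubst K n (k + 1)) := by
  have geomSubst_hg (l : ℕ) : geomSubst K n l (hg n K ⟨0, by omega⟩ ⟨k, hkn⟩) =
      geomPrefix K l 0 * geomPrefix K l (k + 1) - geomPrefix K l k * geomPrefix K l 1 := by
    simp [hg]
  refine SetLike.lt_iff_le_and_exists.2 ⟨ker_geomSubst_le_ker_geomSubst_succ hk,
    hg n K ⟨0, by omega⟩ ⟨k, hkn⟩, ?_, ?_⟩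
  · rw [RingHom.mem_ker, geomSubst_hg, sub_eq_zero]
    exact hankelMinorsVanish_geomPrefix 0 k (by omega) (by omega)
  · rw [RingHom.mem_ker, geomSubst_hg, geomPrefix_of_le k.zero_le, geomPrefix_of_le le_rfl,
      geomPrefix_of_le hk, geomPrefix_of_lt k.lt_succ_self]
    intro h
    have heval := congrArg (eval fun i => if i = 1 then (0 : K) else 1) h
    simp [show k ≠ 0 by omega] at heval

theorem le_height_ker_geomSubst (hkn : k + 1 ≤ n) :
    (k : ℕ∞) ≤ (RingHom.ker (geomSubst K n (k + 1))).height := by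
  induction k with
  | zero => simp
  | succ k ih =>
    have := RingHom.ker_isPrime (geomSubst K n (k + 1))
    have := RingHom.ker_isPrime (geomSubst K n (k + 1 + 1))
    rw [Nat.cast_add_one]
    exact (add_le_add_left (ih (by omega)) 1).trans (Ideal.height_add_one_le_of_lt_of_isPrime
      (ker_geomSubst_lt_succ k.succ_pos hkn))

theorem le_height_IX (hn : 1 ≤ n) : ((n - 1 : ℕ) : ℕ∞) ≤ (IX n K).height := by
  obtain ⟨k, rfl⟩ := Nat.exists_eq_add_of_le' hn
  rw [IX_eq_ker_geomSubst]
  exact le_height_ker_geomSubst le_rfl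

end HankelPrime

/-- For a connected labeled semi-Hamiltonian graph `G` on `[n]`
(`L_n ⊆ G`, `{1,n} ∉ E(G)`), the minimal primes of `I_G` are exactly `I_X` and
`(x_2,…,x_n)`; in particular `height I_G = n - 1`. -/
theorem stmt_3 (n : ℕ) (K : Type*) [Field K] (hn : 2 ≤ n)
    (G : SimpleGraph (Fin n)) (hG : G.Connected) (hpath : pathG n ≤ G)
    (hne : ¬ G.Adj ⟨0, by omega⟩ ⟨n - 1, by omega⟩) :
    (hankelIdeal n K G).minimalPrimes = {IX n K, Pvars n K 1 (n - 1)} ∧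
      ht (hankelIdeal n K G) = ((n - 1 : ℕ) : ℕ∞) := by
  have minimalPrimes_eq : (hankelIdeal n K G).minimalPrimes = {IX n K, Pvars n K 1 (n - 1)} :=
    minimalPrimes_eq_pair (hankelIdeal_mono le_top) (hankelIdeal_le_Pvars (by omega) hne)
      (not_IX_le_Pvars hn) (not_Pvars_le_IX hn)
      fun P _ hP => IX_le_or_Pvars_le ((hankelIdeal_mono hpath).trans hP)
  have height_Pvars_eq : (Pvars n K 1 (n - 1)).height = ((n - 1 : ℕ) : ℕ∞) := by
    simpa using height_Pvars (K := K) (lo := 1) (n.sub_le 1)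
  refine ⟨minimalPrimes_eq, ?_⟩
  rw [ht_eq_height, Ideal.height_eq_inf_minimalPrimes, minimalPrimes_eq, iInf_pair,
    height_Pvars_eq]
  exact inf_eq_right.2 (le_height_IX (by omega))
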